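/- Let Q'_n(8,4) (n ≥ 2) be the cylinder octagonal-quadrilateral network: the simple graph on the 8n vertices u_1,…,u_{4n}, v_1,…,v_{4n} whose edges are u_i u_{i+1} and v_i v_{i+1} for 1 ≤ i ≤ 4n−1, the closing edges u_{4n} u_1 and v_{4n} v_1, and u_i v_i for every i ≡ 0 or 1 (mod 4). Let W(Q'_n(8,4)) denote its Wiener index and Kf(Q'_n(8,4)) = 8n · ∑_{k=2}^{8n} 1/μ_k its Kirchhoff index, where 0 = μ_1 < μ_2 ≤ ⋯ ≤ μ_{8n} are the eigenvalues of its Laplacian matrix. Then lim_{n→∞} W(Q'_n(8,4))/Kf(Q'_n(8,4)) = 3. -/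

import Mathlib

/-! With `L = 4 n`, both indices are of order `n³`, and it suffices to find the leading constants.

**Wiener index.** Forgetting the side `u` or `v` maps the network onto a cycle of length `L`.
The map does not increase distances (`cycDist_le_length`). Conversely, every vertex `u_i` is joined
to `v_i` by a path of length at most `3`, because `i` or one of its neighbours on the cycle carries
a rung; so graph distance exceeds cyclic distance by at most `3` (`exists_walk_le`). Summing cyclic
distances gives `32 n³ ≤ W ≤ 32 n³ + 96 n²`.

**Kirchhoff index.** The sum of the reciprocals of the nonzero eigenvalues is the trace of the
pseudo-inverse of the Laplacian (`trace_eq_sum_inv`). Write `C` for the Laplacian of the cycle and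
`D` for the diagonal indicator matrix of the rungs. On vectors symmetric under `u ↔ v` the Laplacian
acts as `C`, and on antisymmetric ones as `C + 2 D`. The pseudo-inverse of `C` is an explicit
quadratic Green's matrix, of trace `(L² - 1) / 12` (`green_mul_cycLap`, `green_trace`). The matrix
`C + 2 D` is bounded below by `1 / 4`, again because every vertex is within one step of a rung
(`antiLap_coercive`), so its inverse has trace between `0` and `4 L`. Hence
`Kf = 8 n * ((16 n² - 1) / 12 + O(n))`, which is `(32 / 3) n³` to leading order, and
`32 / (32 / 3) = 3`. -/

/-- Underlying relation of the cylinder octagonal-quadrilateral network `Q'_n(8,4)`: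
`Sum.inl i` is the vertex `u_{i+1}`, `Sum.inr i` is the vertex `v_{i+1}`. -/
def cylinderRel (n : ℕ) : (Fin (4 * n) ⊕ Fin (4 * n)) → (Fin (4 * n) ⊕ Fin (4 * n)) → Prop
  | Sum.inl i, Sum.inl j => i.val + 1 = j.val ∨ (i.val = 4 * n - 1 ∧ j.val = 0)
  | Sum.inr i, Sum.inr j => i.val + 1 = j.val ∨ (i.val = 4 * n - 1 ∧ j.val = 0)
  | Sum.inl i, Sum.inr j => i = j ∧ ((i.val + 1) % 4 = 0 ∨ (i.val + 1) % 4 = 1)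
  | Sum.inr _, Sum.inl _ => False

instance (n : ℕ) : DecidableRel (cylinderRel n) := fun a b => by
  rcases a with i | i <;> rcases b with j | j <;> simp only [cylinderRel] <;> infer_instance

/-- The cylinder octagonal-quadrilateral network `Q'_n(8,4)`. -/
def cylinder (n : ℕ) : SimpleGraph (Fin (4 * n) ⊕ Fin (4 * n)) :=
  SimpleGraph.fromRel (cylinderRel n)

instance (n : ℕ) : DecidableRel (cylinder n).Adj := fun a b =>
  decidable_of_iff (a ≠ b ∧ (cylinderRel n a b ∨ cylinderRel n b a)) Iff.rfl

/-! ### Sums of reciprocal eigenvalues as traces -/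

/-- If `G` inverts the Hermitian matrix `A` up to a matrix `J` with `J A = 0` and `G J = 0`, i.e.
`G` is the pseudo-inverse of `A`, then the trace of `G` is the sum of the reciprocals of the nonzero
eigenvalues of `A`; zero eigenvalues contribute `0⁻¹ = 0`. -/
theorem trace_eq_sum_inv {ι : Type*} [Fintype ι] [DecidableEq ι] {A G J : Matrix ι ι ℝ}
    (hA : A.IsHermitian) (hGA : G * A = 1 - J) (hJA : J * A = 0) (hGJ : G * J = 0) :
    G.trace = ∑ i, (hA.eigenvalues i)⁻¹ := by
  set U : Matrix ι ι ℝ := (hA.eigenvectorUnitary : Matrix ι ι ℝ) with hU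
  have hUU : U * star U = 1 := Unitary.coe_mul_star_self hA.eigenvectorUnitary
  have hUU' : star U * U = 1 := Unitary.coe_star_mul_self hA.eigenvectorUnitary
  have hAU : A * U = U * Matrix.diagonal hA.eigenvalues := by
    have h := hA.spectral_theorem
    have h2 : A = U * Matrix.diagonal hA.eigenvalues * star U := by
      conv_lhs => rw [h]
      rfl
    conv_lhs => rw [h2]
    rw [Matrix.mul_assoc, hUU', Matrix.mul_one]
  -- Every eigenvector of `A` for `λ` is an eigenvector of `G` for `λ⁻¹`, also when `λ = 0`.
  have hkey : G * U = U * Matrix.diagonal (fun i => (hA.eigenvalues i)⁻¹) := by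
    have h1 : G * U * Matrix.diagonal hA.eigenvalues = U - J * U := by
      rw [Matrix.mul_assoc, ← hAU, ← Matrix.mul_assoc, hGA, Matrix.sub_mul, Matrix.one_mul]
    have h2 : J * U * Matrix.diagonal hA.eigenvalues = 0 := by
      rw [Matrix.mul_assoc, ← hAU, ← Matrix.mul_assoc, hJA, Matrix.zero_mul]
    ext a i
    have e1 := congrFun (congrFun h1 a) i
    have e2 := congrFun (congrFun h2 a) i
    simp only [Matrix.mul_diagonal, Matrix.sub_apply, Matrix.zero_apply] at e1 e2 ⊢
    by_cases h0 : hA.eigenvalues i = 0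
    · -- Here column `i` of `U` is fixed by `J`, hence killed by `G`.
      have h3 : ∀ b, U b i = (J * U) b i := fun b => by
        have e := congrFun (congrFun h1 b) i
        simp only [Matrix.mul_diagonal, Matrix.sub_apply, h0] at e
        linarith
      have h4 : (G * U) a i = (G * (J * U)) a i := by
        rw [Matrix.mul_apply, Matrix.mul_apply]
        exact Finset.sum_congr rfl fun b _ => by rw [h3 b]
      rw [h4, ← Matrix.mul_assoc, hGJ, h0]
      simp
    · have h3 : (J * U) a i = 0 := (mul_eq_zero.mp e2).resolve_right h0
      rw [h3, sub_zero] at e1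
      rw [← e1, mul_assoc, mul_inv_cancel₀ h0, mul_one]
  calc G.trace = (G * U * star U).trace := by rw [Matrix.mul_assoc, hUU, Matrix.mul_one]
    _ = ∑ i, (hA.eigenvalues i)⁻¹ := by
      rw [hkey, Matrix.trace_mul_comm, ← Matrix.mul_assoc, hUU', Matrix.one_mul,
        Matrix.trace_diagonal]

theorem roots_prod_X_sub_C_eq_map {τ : Type*} (s : Finset τ) (f : τ → ℝ) :
    (∏ i ∈ s, (Polynomial.X - Polynomial.C (f i))).roots = s.val.map f := by
  have := Polynomial.roots_multiset_prod_X_sub_C (s.val.map f)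
  rwa [Multiset.map_map] at this

/-- Two factorisations of the characteristic polynomial into linear factors have the same multiset
of roots, so the sum of the (junk-zero at `0`) reciprocals can be read off from either. -/
theorem sum_inv_eq_of_charpoly {ι κ : Type*} [Fintype ι] [DecidableEq ι] [Fintype κ]
    {A : Matrix ι ι ℝ} (hA : A.IsHermitian) (μ : κ → ℝ)
    (h : A.charpoly = ∏ i, (Polynomial.X - Polynomial.C (μ i))) :
    ∑ i, (hA.eigenvalues i)⁻¹ = ∑ i, (μ i)⁻¹ := by
  have h1 := hA.charpoly_eq
  rw [h] at h1
  have h2 := congrArg Polynomial.roots h1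
  have h3 : (Finset.univ : Finset κ).val.map μ
      = (Finset.univ : Finset ι).val.map hA.eigenvalues := by
    rw [← roots_prod_X_sub_C_eq_map, ← roots_prod_X_sub_C_eq_map]; exact h2
  have h4 := congrArg (fun s : Multiset ℝ => (s.map (·⁻¹)).sum) h3
  simp only [Multiset.map_map] at h4
  exact h4.symm

/-! ### The Laplacian of a cycle and its Green's matrix -/

/-- The Laplacian matrix of the cycle on `Fin L`, with cyclic addition of indices (meaningful for
`3 ≤ L`, where `j + 1` and `j - 1` are distinct). -/
noncomputable def cycLap (L : ℕ) [NeZero L] : Matrix (Fin L) (Fin L) ℝ :=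
  fun i j => 2 * (if i = j then 1 else 0) - (if i = j + 1 then 1 else 0)
    - (if i = j - 1 then 1 else 0)

/-- The Green's function of the cycle of length `L` as a function of the difference `k` of two
indices: `-k (L - k) / (2 L)` has second difference `1 / L` away from `0`, and the constant makes
the sum over `0 ≤ k < L` vanish. -/
noncomputable def greenFn (L : ℕ) (k : ℝ) : ℝ := ((L : ℝ) ^ 2 - 1) / (12 * L) - k * (L - k) / (2 * L)

/-- The Green's matrix (pseudo-inverse of the Laplacian) of the cycle. -/
noncomputable def green (L : ℕ) [NeZero L] : Matrix (Fin L) (Fin L) ℝ :=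
  fun i j => greenFn L ((i - j).val : ℝ)

theorem mul_cycLap {L : ℕ} [NeZero L] (g : Matrix (Fin L) (Fin L) ℝ) (i j : Fin L) :
    (g * cycLap L) i j = 2 * g i j - g i (j + 1) - g i (j - 1) := by
  simp only [Matrix.mul_apply, cycLap, mul_sub, Finset.sum_sub_distrib]
  simp [mul_comm]

theorem val_add_one_eq {L : ℕ} [NeZero L] (hL : 2 ≤ L) (i : Fin L) :
    (i + 1).val = if i.val + 1 = L then 0 else i.val + 1 := by
  have := i.isLt
  rw [Fin.val_add, Fin.val_one', Nat.mod_eq_of_lt (a := 1) (by omega)]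
  split_ifs with h
  · rw [h, Nat.mod_self]
  · exact Nat.mod_eq_of_lt (by omega)

theorem val_sub_one_eq {L : ℕ} [NeZero L] (hL : 2 ≤ L) (i : Fin L) :
    (i - 1).val = if i.val = 0 then L - 1 else i.val - 1 := by
  have h := val_add_one_eq hL (i - 1)
  rw [sub_add_cancel] at h
  have := i.isLt
  have := (i - 1).isLt
  split_ifs at h ⊢ <;> omega

theorem green_mul_cycLap {L : ℕ} [NeZero L] (hL : 2 ≤ L) :
    green L * cycLap L = 1 - Matrix.of (fun _ _ => (1 / L : ℝ)) := by
  ext i j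
  rw [mul_cycLap]
  have hL0 : (L : ℝ) ≠ 0 := by exact_mod_cast (NeZero.ne L)
  simp only [green, Matrix.sub_apply, Matrix.one_apply, Matrix.of_apply]
  have e1 : i - (j + 1) = (i - j) - 1 := by abel
  have e2 : i - (j - 1) = (i - j) + 1 := by abel
  -- Everything depends on `k = i - j` only; `k = 0` and `k = L - 1` are the wrap-around cases.
  have e3 : i = j ↔ (i - j).val = 0 := by
    rw [← sub_eq_zero, Fin.ext_iff, Fin.val_zero]
  simp only [e1, e2, e3, val_add_one_eq hL, val_sub_one_eq hL]
  generalize hk : (i - j).val = k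
  have hkL : k < L := hk ▸ (i - j).isLt
  have hL1 : ((L - 1 : ℕ) : ℝ) = L - 1 := by rw [Nat.cast_sub (by omega)]; simp
  by_cases h0 : k = 0
  · subst h0
    have : ¬ (0 + 1 = L) := by omega
    simp only [greenFn, if_true, this, if_false, hL1]
    field_simp; push_cast; ring
  · have hk1 : ((k - 1 : ℕ) : ℝ) = k - 1 := by rw [Nat.cast_sub (by omega)]; simp
    by_cases h1 : k + 1 = L
    · have : (L : ℝ) = k + 1 := by rw [← h1]; simp
      simp only [h0, h1, greenFn, if_true, if_false, hk1]
      rw [this] at hL0 ⊢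
      field_simp; push_cast; ring
    · simp only [h0, h1, greenFn, if_false, hk1]
      field_simp; push_cast; ring

theorem sum_fin_sub {L : ℕ} [NeZero L] (f : ℕ → ℝ) (i : Fin L) :
    ∑ j : Fin L, f (i - j).val = ∑ k ∈ Finset.range L, f k := by
  rw [← Fin.sum_univ_eq_sum_range]
  exact (Equiv.subLeft i).sum_comp fun k : Fin L => f k.val

theorem sum_quad (c : ℝ) (L : ℕ) : ∑ k ∈ Finset.range L, (k : ℝ) * (c - k)
    = c * (L * (L - 1) / 2) - L * (L - 1) * (2 * L - 1) / 6 := by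
  induction L with
  | zero => simp
  | succ L ih => rw [Finset.sum_range_succ, ih]; push_cast; ring

theorem green_row_sum {L : ℕ} [NeZero L] (i : Fin L) : ∑ j, green L i j = 0 := by
  have hL0 : (L : ℝ) ≠ 0 := by exact_mod_cast (NeZero.ne L)
  have := sum_fin_sub (fun k => greenFn L k) i
  simp only [green]
  rw [this]
  simp only [greenFn, Finset.sum_sub_distrib, ← Finset.sum_div, sum_quad]
  simp
  field_simp; ring

theorem green_trace {L : ℕ} [NeZero L] : (green L).trace = ((L : ℝ) ^ 2 - 1) / 12 := by
  have hL0 : (L : ℝ) ≠ 0 := by exact_mod_cast (NeZero.ne L)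
  simp [Matrix.trace, green, greenFn]
  field_simp

/-- The sum of the distances from a fixed vertex of a cycle of even length `2 m`. -/
theorem sum_min (m : ℕ) :
    ∑ k ∈ Finset.range (2 * m), ((min k (2 * m - k) : ℕ) : ℝ) = (m : ℝ) ^ 2 := by
  rw [two_mul, Finset.sum_range_add]
  have h1 : ∀ k ∈ Finset.range m, ((min k (m + m - k) : ℕ) : ℝ) = k := fun k hk => by
    rw [Finset.mem_range] at hk
    congr 1; omega
  have h2 : ∀ k ∈ Finset.range m, ((min (m + k) (m + m - (m + k)) : ℕ) : ℝ) = m - k :=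
    fun k hk => by
      rw [Finset.mem_range] at hk
      rw [← Nat.cast_sub hk.le]
      congr 1; omega
  rw [Finset.sum_congr rfl h1, Finset.sum_congr rfl h2, ← Finset.sum_add_distrib]
  simp [sq]

/-! ### The antisymmetric block -/

/-- The indicator function of the rungs: indices `i` (counted from `0`) with `u_{i+1}` adjacent to
`v_{i+1}`. -/
noncomputable def rung (L : ℕ) (i : Fin L) : ℝ :=
  if (i.val + 1) % 4 = 0 ∨ (i.val + 1) % 4 = 1 then 1 else 0

/-- The action of the Laplacian of the network on vectors `(v, -v)`: the Laplacian of the cycle plus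
twice the diagonal matrix of the rungs. -/
noncomputable def antiLap (L : ℕ) [NeZero L] : Matrix (Fin L) (Fin L) ℝ :=
  cycLap L + (2 : ℝ) • Matrix.diagonal (rung L)

/-- Every index carries a rung or is next to one that does. -/
theorem rung_cover {n : ℕ} [NeZero (4 * n)] (i : Fin (4 * n)) :
    rung _ i = 1 ∨ rung _ (i + 1) = 1 ∨ rung _ (i - 1) = 1 := by
  have hn := NeZero.ne (4 * n)
  have h1 := val_add_one_eq (by omega) i
  have h2 := val_sub_one_eq (by omega) i
  have := i.isLt
  simp only [rung, ite_eq_left_iff, zero_ne_one, imp_false, not_not]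
  split_ifs at h1 h2 <;> omega

theorem rung_nonneg {L : ℕ} (i : Fin L) : 0 ≤ rung L i := by
  unfold rung; split_ifs <;> norm_num

theorem vecMul_antiLap {L : ℕ} [NeZero L] (v : Fin L → ℝ) (j : Fin L) :
    (Matrix.vecMul v (antiLap L)) j
      = 2 * v j - v (j + 1) - v (j - 1) + 2 * (rung L j * v j) := by
  have h := mul_cycLap (Matrix.of fun _ : Fin L => v) j j
  have h' : (Matrix.vecMul v (cycLap L)) j = 2 * v j - v (j + 1) - v (j - 1) := h
  rw [antiLap, Matrix.vecMul_add, Pi.add_apply, h', Matrix.vecMul_smul, Pi.smul_apply,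
    Matrix.vecMul_diagonal, smul_eq_mul, mul_comm (v j)]

/-- The quadratic form of `antiLap` is `∑ (v j - v (j + 1))² + 2 ∑ rung j * v j²`, and `v j²` is
controlled by the value at a rung at most one step away together with the increment to it. -/
theorem antiLap_coercive {L : ℕ} [NeZero L]
    (hcov : ∀ i : Fin L, rung _ i = 1 ∨ rung _ (i + 1) = 1 ∨ rung _ (i - 1) = 1)
    (v : Fin L → ℝ) :
    ∑ j, v j ^ 2 ≤ 4 * ∑ j, (Matrix.vecMul v (antiLap L)) j * v j := by
  have sh : ∀ f : Fin L → ℝ, ∑ j, f (j + 1) = ∑ j, f j :=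
    fun f => Equiv.sum_comp (Equiv.addRight (1 : Fin L)) f
  have sh' : ∀ f : Fin L → ℝ, ∑ j, f (j - 1) = ∑ j, f j :=
    fun f => Equiv.sum_comp (Equiv.subRight (1 : Fin L)) f
  have hpt : ∀ j, v j ^ 2 ≤ 2 * (v j - v (j + 1)) ^ 2 + 2 * (v j - v (j - 1)) ^ 2
      + 2 * (rung L (j + 1) * v (j + 1) ^ 2) + 2 * (rung L (j - 1) * v (j - 1) ^ 2)
      + rung L j * v j ^ 2 := by
    intro j
    have a1 := mul_nonneg (rung_nonneg j) (sq_nonneg (v j))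
    have a2 := mul_nonneg (rung_nonneg (j + 1)) (sq_nonneg (v (j + 1)))
    have a3 := mul_nonneg (rung_nonneg (j - 1)) (sq_nonneg (v (j - 1)))
    have a4 := sq_nonneg (v j - v (j + 1))
    have a5 := sq_nonneg (v j - v (j - 1))
    rcases hcov j with h | h | h
    · rw [h] at a1 ⊢; linarith
    · rw [h] at a2 ⊢
      nlinarith [sq_nonneg (v j - 2 * v (j + 1))]
    · rw [h] at a3 ⊢
      nlinarith [sq_nonneg (v j - 2 * v (j - 1))]
  have hs := Finset.sum_le_sum fun j (_ : j ∈ Finset.univ) => hpt j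
  have hq : ∑ j, (Matrix.vecMul v (antiLap L)) j * v j
      = ∑ j, (v j - v (j + 1)) ^ 2 + 2 * ∑ j, rung L j * v j ^ 2 := by
    have e1 := sh fun j => v j ^ 2
    have e2 := sh' fun j => v (j + 1) * v j
    simp only [sub_add_cancel] at e2
    have e3 : ∀ j, (Matrix.vecMul v (antiLap L)) j * v j
        = (v j - v (j + 1)) ^ 2 + 2 * (rung L j * v j ^ 2) + v j ^ 2 - v (j + 1) ^ 2
          + v (j + 1) * v j - v j * v (j - 1) := by
      intro j; rw [vecMul_antiLap]; ring
    rw [Finset.sum_congr rfl fun j _ => e3 j]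
    simp only [Finset.sum_add_distrib, Finset.sum_sub_distrib, e1, e2, ← Finset.mul_sum]
    ring
  have f1 := sh' fun j => (v (j + 1) - v j) ^ 2
  simp only [sub_add_cancel] at f1
  have f2 := sh fun j => rung L j * v j ^ 2
  have f3 := sh' fun j => rung L j * v j ^ 2
  have f4 : ∑ j, (v (j + 1) - v j) ^ 2 = ∑ j, (v j - v (j + 1)) ^ 2 :=
    Finset.sum_congr rfl fun j _ => by ring
  simp only [Finset.sum_add_distrib, ← Finset.mul_sum, f1, f2, f3, f4] at hs
  have f5 : 0 ≤ ∑ j, rung L j * v j ^ 2 :=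
    Finset.sum_nonneg fun j _ => mul_nonneg (rung_nonneg j) (sq_nonneg _)
  rw [hq]
  linarith

theorem exists_inv_antiLap {n : ℕ} [NeZero (4 * n)] :
    ∃ h : Matrix (Fin (4 * n)) (Fin (4 * n)) ℝ,
      h * antiLap (4 * n) = 1 ∧ 0 ≤ h.trace ∧ h.trace ≤ 16 * n := by
  have hdet : (antiLap (4 * n)).det ≠ 0 := by
    intro h0
    obtain ⟨v, hv, hv0⟩ := Matrix.exists_vecMul_eq_zero_iff.mpr h0
    have hc := antiLap_coercive rung_cover v
    simp only [hv0, Pi.zero_apply, zero_mul, Finset.sum_const_zero, mul_zero] at hc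
    refine hv (funext fun j => ?_)
    have := Finset.single_le_sum (f := fun j => v j ^ 2) (fun j _ => sq_nonneg (v j))
      (Finset.mem_univ j)
    have h2 : v j ^ 2 = 0 := le_antisymm (this.trans hc) (sq_nonneg _)
    simpa using h2
  have hinv : (antiLap (4 * n))⁻¹ * antiLap (4 * n) = 1 :=
    Matrix.nonsing_inv_mul _ (isUnit_iff_ne_zero.mpr hdet)
  refine ⟨(antiLap (4 * n))⁻¹, hinv, ?_⟩
  set h := (antiLap (4 * n))⁻¹
  have hd : ∀ i, 0 ≤ h i i ∧ h i i ≤ 4 := by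
    intro i
    -- Row `i` of the inverse is a `v` with `v * antiLap = e_i`, so coercivity reads
    -- `(v i)² ≤ ∑ j, (v j)² ≤ 4 * v i`.
    have hrow : ∀ j, Matrix.vecMul (h i) (antiLap (4 * n)) j
        = (1 : Matrix (Fin (4 * n)) (Fin (4 * n)) ℝ) i j :=
      fun j => congrFun (congrFun hinv i) j
    have hc := antiLap_coercive rung_cover (h i)
    simp only [hrow, Matrix.one_apply, ite_mul, one_mul, zero_mul, Finset.sum_ite_eq,
      Finset.mem_univ, if_true] at hc
    have := Finset.single_le_sum (f := fun j => h i j ^ 2) (fun j _ => sq_nonneg (h i j))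
      (Finset.mem_univ i)
    constructor <;> nlinarith
  refine ⟨Finset.sum_nonneg fun i _ => (hd i).1, ?_⟩
  have := Finset.sum_le_sum fun i (_ : i ∈ Finset.univ) => (hd i).2
  simp only [Finset.sum_const, Finset.card_univ, Fintype.card_fin, nsmul_eq_mul] at this
  push_cast at this
  simp only [Matrix.trace, Matrix.diag]
  linarith

/-! ### The Laplacian of the network -/

theorem cylinder_adj_ll {n : ℕ} [NeZero (4 * n)] (i j : Fin (4 * n)) :
    (cylinder n).Adj (Sum.inl i) (Sum.inl j) ↔ i = j + 1 ∨ i = j - 1 := by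
  have hn := NeZero.ne (4 * n)
  have h1 := val_add_one_eq (by omega) j
  have h2 := val_sub_one_eq (by omega) j
  have := i.isLt
  have := j.isLt
  simp only [cylinder, SimpleGraph.fromRel_adj, cylinderRel, ne_eq, Sum.inl.injEq, Fin.ext_iff,
    h1, h2]
  split_ifs <;> omega

theorem cylinder_adj_rr {n : ℕ} [NeZero (4 * n)] (i j : Fin (4 * n)) :
    (cylinder n).Adj (Sum.inr i) (Sum.inr j) ↔ i = j + 1 ∨ i = j - 1 := by
  rw [← cylinder_adj_ll]
  simp [cylinder, cylinderRel]

theorem cylinder_adj_lr {n : ℕ} (i j : Fin (4 * n)) :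
    (cylinder n).Adj (Sum.inl i) (Sum.inr j) ↔
      i = j ∧ ((i.val + 1) % 4 = 0 ∨ (i.val + 1) % 4 = 1) := by
  simp [cylinder, cylinderRel]

theorem lapMatrix_cylinder {n : ℕ} [NeZero (4 * n)] :
    (cylinder n).lapMatrix ℝ = Matrix.fromBlocks
      (cycLap (4 * n) + Matrix.diagonal (rung _)) (-Matrix.diagonal (rung _))
      (-Matrix.diagonal (rung _)) (cycLap (4 * n) + Matrix.diagonal (rung _)) := by
  have hn := NeZero.ne (4 * n)
  -- The two cyclic neighbours of an index are distinct because `3 ≤ 4 * n`.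
  have hne : ∀ j : Fin (4 * n), j + 1 ≠ j - 1 ∧ j + 1 ≠ j ∧ j - 1 ≠ j := by
    intro j
    have h1 := val_add_one_eq (by omega) j
    have h2 := val_sub_one_eq (by omega) j
    have := j.isLt
    simp only [ne_eq, Fin.ext_iff, h1, h2]
    split_ifs <;> omega
  have hC : ∀ i j : Fin (4 * n), (if i = j + 1 ∨ i = j - 1 then (1 : ℝ) else 0)
      = (if i = j + 1 then 1 else 0) + (if i = j - 1 then 1 else 0) := by
    intro i j
    have := hne j
    by_cases h1 : i = j + 1
    · subst h1; simp [this.1]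
    · simp [h1]
  have hsum : ∀ i : Fin (4 * n),
      ∑ j, (if i = j + 1 ∨ i = j - 1 then (1 : ℝ) else 0) = 2 := by
    intro i
    simp only [hC, Finset.sum_add_distrib]
    simp only [← sub_eq_iff_eq_add, eq_sub_iff_add_eq]
    simp
    norm_num
  have hR : ∀ i j : Fin (4 * n),
      (if i = j ∧ ((i.val + 1) % 4 = 0 ∨ (i.val + 1) % 4 = 1) then (1 : ℝ) else 0)
        = Matrix.diagonal (rung _) i j := by
    intro i j
    simp only [Matrix.diagonal_apply, rung, ite_and]
  have hadj : ∀ x y, (if (cylinder n).Adj x y then (1 : ℝ) else 0) = Matrix.fromBlocks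
      (Matrix.of fun i j : Fin (4 * n) => if i = j + 1 ∨ i = j - 1 then (1 : ℝ) else 0)
      (Matrix.diagonal (rung _)) (Matrix.diagonal (rung _))
      (Matrix.of fun i j : Fin (4 * n) => if i = j + 1 ∨ i = j - 1 then (1 : ℝ) else 0) x y := by
    rintro (i | i) (j | j)
    · simp [cylinder_adj_ll]
    · simp only [cylinder_adj_lr, hR, Matrix.fromBlocks_apply₁₂]
    · simp only [(cylinder n).adj_comm (Sum.inr i), cylinder_adj_lr, hR,
        Matrix.fromBlocks_apply₂₁]
      simp only [Matrix.diagonal_apply]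
      by_cases h : i = j
      · simp [h]
      · simp [h, Ne.symm h]
    · simp [cylinder_adj_rr]
  have hdeg : ∀ x, ((cylinder n).degree x : ℝ) = 2 + Sum.elim (rung _) (rung _) x := by
    intro x
    rw [SimpleGraph.degree_eq_sum_if_adj]
    simp only [hadj, Fintype.sum_sum_type]
    rcases x with i | i
    · simp only [Matrix.fromBlocks_apply₁₁, Matrix.fromBlocks_apply₁₂, Matrix.of_apply, hsum]
      simp [Matrix.diagonal_apply]
    · simp only [Matrix.fromBlocks_apply₂₁, Matrix.fromBlocks_apply₂₂, Matrix.of_apply, hsum]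
      simp [Matrix.diagonal_apply, add_comm]
  ext x y
  rw [SimpleGraph.lapMatrix, Matrix.sub_apply, SimpleGraph.degMatrix, SimpleGraph.adjMatrix_apply,
    hadj, Matrix.diagonal_apply, hdeg]
  rcases x with i | i <;> rcases y with j | j
  · simp only [Sum.inl.injEq, Sum.elim_inl, Matrix.fromBlocks_apply₁₁, Matrix.of_apply, hC,
      Matrix.add_apply, cycLap, Matrix.diagonal_apply]
    split_ifs <;> ring
  · simp only [reduceCtorEq, if_false, zero_sub, Matrix.fromBlocks_apply₁₂, Matrix.neg_apply]
  · simp only [reduceCtorEq, if_false, zero_sub, Matrix.fromBlocks_apply₂₁, Matrix.neg_apply]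
  · simp only [Sum.inr.injEq, Sum.elim_inr, Matrix.fromBlocks_apply₂₂, Matrix.of_apply, hC,
      Matrix.add_apply, cycLap, Matrix.diagonal_apply]
    split_ifs <;> ring

/-- The pseudo-inverse of the Laplacian is `(1 / 2) [g + h, g - h; g - h, g + h]`, where `g` is the
Green's matrix of the cycle and `h` the inverse of `antiLap`. Its trace is `tr g + tr h`. -/
theorem sum_inv_bounds {n : ℕ} [NeZero (4 * n)] (μ : Fin (8 * n) → ℝ)
    (hμ : ((cylinder n).lapMatrix ℝ).charpoly
      = ∏ i : Fin (8 * n), (Polynomial.X - Polynomial.C (μ i))) :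
    ((4 * n : ℝ) ^ 2 - 1) / 12 ≤ ∑ i, (μ i)⁻¹ ∧
      ∑ i, (μ i)⁻¹ ≤ ((4 * n : ℝ) ^ 2 - 1) / 12 + 16 * n := by
  have hn := NeZero.ne (4 * n)
  obtain ⟨h, hh, ht0, ht1⟩ := exists_inv_antiLap (n := n)
  have hA : ((cylinder n).lapMatrix ℝ).IsHermitian := (cylinder n).isHermitian_lapMatrix ℝ
  set D : Matrix (Fin (4 * n)) (Fin (4 * n)) ℝ := Matrix.diagonal (rung _) with hD
  set C := cycLap (4 * n) with hCdef
  set g := green (4 * n) with hg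
  set E : Matrix (Fin (4 * n)) (Fin (4 * n)) ℝ :=
    Matrix.of (fun _ _ => (1 / (4 * n : ℕ) : ℝ)) with hE
  have hLap : (cylinder n).lapMatrix ℝ = Matrix.fromBlocks (C + D) (-D) (-D) (C + D) :=
    lapMatrix_cylinder
  have hgC : g * C = 1 - E := green_mul_cycLap (by omega)
  have hhC : h * C + (2 : ℝ) • (h * D) = 1 := by
    rw [← hh, antiLap, Matrix.mul_add, Matrix.mul_smul]
  have hgE : g * E = 0 := by
    ext i j
    simp only [Matrix.mul_apply, hE, Matrix.of_apply, ← Finset.sum_mul, hg, green_row_sum,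
      zero_mul, Matrix.zero_apply]
  have hEC : E * C = 0 := by
    ext i j
    rw [mul_cycLap]
    simp only [hE, Matrix.of_apply, Matrix.zero_apply]
    ring
  -- `J` is the orthogonal projection onto the constant vectors, the kernel of the Laplacian.
  set G := Matrix.fromBlocks ((1 / 2 : ℝ) • (g + h)) ((1 / 2 : ℝ) • (g - h))
    ((1 / 2 : ℝ) • (g - h)) ((1 / 2 : ℝ) • (g + h)) with hG
  set J := Matrix.fromBlocks ((1 / 2 : ℝ) • E) ((1 / 2 : ℝ) • E)
    ((1 / 2 : ℝ) • E) ((1 / 2 : ℝ) • E) with hJ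
  have hhC' : h * C = 1 - (2 : ℝ) • (h * D) := eq_sub_of_add_eq hhC
  have hGA : G * (cylinder n).lapMatrix ℝ = 1 - J := by
    have p1 : (1 / 2 : ℝ) • (g + h) * (C + D) + (1 / 2 : ℝ) • (g - h) * (-D)
        = 1 - (1 / 2 : ℝ) • E := by
      simp only [Matrix.smul_mul, Matrix.add_mul, Matrix.sub_mul, Matrix.mul_add,
        Matrix.mul_neg, hgC, hhC']
      module
    have p2 : (1 / 2 : ℝ) • (g + h) * (-D) + (1 / 2 : ℝ) • (g - h) * (C + D)
        = - ((1 / 2 : ℝ) • E) := by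
      simp only [Matrix.smul_mul, Matrix.add_mul, Matrix.sub_mul, Matrix.mul_add,
        Matrix.mul_neg, hgC, hhC']
      module
    rw [hLap, hG, Matrix.fromBlocks_multiply, p1, p2,
      add_comm ((1 / 2 : ℝ) • (g - h) * (C + D)), add_comm ((1 / 2 : ℝ) • (g - h) * (-D)),
      p1, p2, eq_sub_iff_add_eq, hJ, Matrix.fromBlocks_add, sub_add_cancel, neg_add_cancel,
      Matrix.fromBlocks_one]
  have hJA : J * (cylinder n).lapMatrix ℝ = 0 := by
    rw [hLap, hJ, Matrix.fromBlocks_multiply]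
    simp only [Matrix.smul_mul, Matrix.mul_add, Matrix.mul_neg, hEC, smul_zero, zero_add, add_neg_cancel,
      neg_add_cancel, Matrix.fromBlocks_zero]
  have hGJ : G * J = 0 := by
    rw [hG, hJ, Matrix.fromBlocks_multiply]
    simp [Matrix.add_mul, Matrix.sub_mul, hgE]
  have htr : G.trace = g.trace + h.trace := by
    simp only [hG, Matrix.trace, Matrix.diag, Fintype.sum_sum_type, Matrix.fromBlocks_apply₁₁,
      Matrix.fromBlocks_apply₂₂, Matrix.smul_apply, Matrix.add_apply, smul_eq_mul,
      ← Finset.mul_sum, Finset.sum_add_distrib]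
    ring
  have e := trace_eq_sum_inv hA hGA hJA hGJ
  rw [sum_inv_eq_of_charpoly hA μ hμ, htr, hg, green_trace] at e
  push_cast at e
  rw [← e]
  constructor <;> linarith

/-! ### Distances in the network -/

/-- The distance between two indices in the cycle on `Fin L`. -/
def cycDist {L : ℕ} (i j : Fin L) : ℕ := min (i - j).val (L - (i - j).val)

theorem val_neg_eq {L : ℕ} [NeZero L] (i j : Fin L) :
    (j - i).val = if (i - j).val = 0 then 0 else L - (i - j).val := by
  have h : ((i - j) + (j - i)).val = 0 := by
    rw [sub_add_sub_cancel, sub_self, Fin.val_zero]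
  rw [Fin.val_add] at h
  have h1 := (i - j).isLt
  have h2 := (j - i).isLt
  have h3 := Nat.dvd_of_mod_eq_zero h
  obtain ⟨c, hc⟩ := h3
  have : c < 2 := by
    by_contra! h
    nlinarith
  interval_cases c <;> split_ifs <;> omega

/-- Going `k` steps forward around a cyclic sequence of successively adjacent vertices. -/
theorem exists_walk_aux {V : Type*} {G : SimpleGraph V} {L : ℕ} [NeZero L] (hL : 2 ≤ L)
    (s : Fin L → V) (hs : ∀ i, G.Adj (s i) (s (i + 1))) (k : ℕ) :
    ∀ i j : Fin L, (j - i).val = k → ∃ p : G.Walk (s i) (s j), p.length = k := by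
  induction k with
  | zero =>
    intro i j h
    have : j = i := by
      rw [← sub_eq_zero, Fin.ext_iff, Fin.val_zero, h]
    subst this
    exact ⟨.nil, rfl⟩
  | succ k ih =>
    intro i j h
    have h1 := val_sub_one_eq hL (j - i)
    rw [h, sub_right_comm] at h1
    obtain ⟨p, hp⟩ := ih i (j - 1) (by simpa using h1)
    have hadj := hs (j - 1)
    rw [sub_add_cancel] at hadj
    exact ⟨p.concat hadj, by rw [SimpleGraph.Walk.length_concat, hp]⟩

theorem exists_walk_cycDist {V : Type*} {G : SimpleGraph V} {L : ℕ} [NeZero L] (hL : 2 ≤ L)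
    (s : Fin L → V) (hs : ∀ i, G.Adj (s i) (s (i + 1))) (i j : Fin L) :
    ∃ p : G.Walk (s i) (s j), p.length ≤ cycDist i j := by
  obtain ⟨p, hp⟩ := exists_walk_aux hL s hs _ i j rfl
  obtain ⟨q, hq⟩ := exists_walk_aux hL s hs _ j i rfl
  have h := val_neg_eq i j
  have := (i - j).isLt
  by_cases hc : (i - j).val ≤ L - (i - j).val
  · exact ⟨q.reverse, by rw [SimpleGraph.Walk.length_reverse, hq, cycDist]; omega⟩
  · exact ⟨p, by rw [hp, cycDist, h]; split_ifs <;> omega⟩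

theorem cylinder_adj_succ {n : ℕ} [NeZero (4 * n)] (i : Fin (4 * n)) :
    (cylinder n).Adj (Sum.inl i) (Sum.inl (i + 1)) ∧
      (cylinder n).Adj (Sum.inr i) (Sum.inr (i + 1)) := by
  rw [cylinder_adj_ll, cylinder_adj_rr]
  simp

theorem exists_walk_cross {n : ℕ} [NeZero (4 * n)] (i : Fin (4 * n)) :
    ∃ p : (cylinder n).Walk (Sum.inl i) (Sum.inr i), p.length ≤ 3 := by
  have hr : ∀ j : Fin (4 * n), rung _ j = 1 →
      (cylinder n).Adj (Sum.inl j) (Sum.inr j) := by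
    intro j hj
    rw [cylinder_adj_lr]
    refine ⟨rfl, ?_⟩
    by_contra hc
    simp [rung, hc] at hj
  rcases rung_cover i with h | h | h
  · exact ⟨.cons (hr _ h) .nil, by simp⟩
  · exact ⟨.cons (cylinder_adj_succ i).1 (.cons (hr _ h)
      (.cons (cylinder_adj_succ i).2.symm .nil)), by simp⟩
  · have h1 := cylinder_adj_succ (i - 1)
    rw [sub_add_cancel] at h1
    exact ⟨.cons h1.1.symm (.cons (hr _ h) (.cons h1.2 .nil)), by simp⟩

/-- The projection of the network onto the cycle, forgetting the side `u` or `v`. -/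
def cylPos {n : ℕ} : Fin (4 * n) ⊕ Fin (4 * n) → Fin (4 * n) := Sum.elim id id

theorem exists_walk_le {n : ℕ} [NeZero (4 * n)] (x y : Fin (4 * n) ⊕ Fin (4 * n)) :
    ∃ p : (cylinder n).Walk x y, p.length ≤ cycDist (cylPos x) (cylPos y) + 3 := by
  have hn := NeZero.ne (4 * n)
  have hl := exists_walk_cycDist (by omega) _ fun i => (cylinder_adj_succ (n := n) i).1
  have hr := exists_walk_cycDist (by omega) _ fun i => (cylinder_adj_succ (n := n) i).2
  rcases x with i | i <;> rcases y with j | j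
  · obtain ⟨p, hp⟩ := hl i j
    exact ⟨p, hp.trans (Nat.le_add_right _ _)⟩
  · obtain ⟨p, hp⟩ := hl i j
    obtain ⟨q, hq⟩ := exists_walk_cross j
    exact ⟨p.append q, by rw [SimpleGraph.Walk.length_append]; exact add_le_add hp hq⟩
  · obtain ⟨p, hp⟩ := hr i j
    obtain ⟨q, hq⟩ := exists_walk_cross j
    exact ⟨p.append q.reverse, by
      rw [SimpleGraph.Walk.length_append, SimpleGraph.Walk.length_reverse]
      exact add_le_add hp hq⟩
  · obtain ⟨p, hp⟩ := hr i j
    exact ⟨p, hp.trans (Nat.le_add_right _ _)⟩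

theorem cycDist_le_of_adj {n : ℕ} [NeZero (4 * n)] (i : Fin (4 * n))
    {x y : Fin (4 * n) ⊕ Fin (4 * n)} (h : (cylinder n).Adj x y) :
    cycDist (cylPos x) i ≤ cycDist (cylPos y) i + 1 := by
  have hn := NeZero.ne (4 * n)
  have key : cylPos x = cylPos y ∨ cylPos x = cylPos y + 1 ∨ cylPos x = cylPos y - 1 := by
    rcases x with a | a <;> rcases y with b | b
    · exact Or.inr ((cylinder_adj_ll a b).mp h)
    · exact Or.inl ((cylinder_adj_lr a b).mp h).1
    · exact Or.inl ((cylinder_adj_lr b a).mp h.symm).1.symm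
    · exact Or.inr ((cylinder_adj_rr a b).mp h)
  have h1 := val_add_one_eq (by omega) (cylPos y - i)
  have h2 := val_sub_one_eq (by omega) (cylPos y - i)
  have := (cylPos y - i).isLt
  rcases key with k | k | k
  · rw [k]; omega
  · rw [cycDist, cycDist, k, add_sub_right_comm, h1]
    split_ifs <;> omega
  · rw [cycDist, cycDist, k, sub_right_comm, h2]
    split_ifs <;> omega

theorem cycDist_le_length {n : ℕ} [NeZero (4 * n)] {x y : Fin (4 * n) ⊕ Fin (4 * n)}
    (p : (cylinder n).Walk x y) : cycDist (cylPos x) (cylPos y) ≤ p.length := by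
  induction p with
  | nil => simp [cycDist]
  | @cons a b c h q ih =>
    have := cycDist_le_of_adj (cylPos c) h
    rw [SimpleGraph.Walk.length_cons]
    omega

theorem dist_bounds {n : ℕ} [NeZero (4 * n)] (x y : Fin (4 * n) ⊕ Fin (4 * n)) :
    cycDist (cylPos x) (cylPos y) ≤ (cylinder n).dist x y ∧
      (cylinder n).dist x y ≤ cycDist (cylPos x) (cylPos y) + 3 := by
  obtain ⟨p, hp⟩ := exists_walk_le x y
  obtain ⟨q, hq⟩ := p.reachable.exists_walk_length_eq_dist
  exact ⟨hq ▸ cycDist_le_length q, (SimpleGraph.dist_le p).trans hp⟩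

theorem sum_cycDist {n : ℕ} [NeZero (4 * n)] :
    ∑ x : Fin (4 * n) ⊕ Fin (4 * n), ∑ y : Fin (4 * n) ⊕ Fin (4 * n),
      (cycDist (cylPos x) (cylPos y) : ℝ) = 64 * (n : ℝ) ^ 3 := by
  have h : ∀ i : Fin (4 * n), ∑ j, (cycDist i j : ℝ) = 4 * (n : ℝ) ^ 2 := by
    intro i
    have h1 := sum_fin_sub (fun k => ((min k (4 * n - k) : ℕ) : ℝ)) i
    have h2 := sum_min (2 * n)
    rw [← mul_assoc] at h2
    norm_num only at h2
    simp only [cycDist]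
    rw [h1, h2]
    push_cast; ring
  simp only [Fintype.sum_sum_type, cylPos, Sum.elim_inl, Sum.elim_inr, id, h, Finset.sum_const,
    Finset.card_univ, Fintype.card_sum, Fintype.card_fin, nsmul_eq_mul]
  push_cast; ring

theorem sum_dist_bounds {n : ℕ} [NeZero (4 * n)] :
    64 * (n : ℝ) ^ 3 ≤ ∑ x : Fin (4 * n) ⊕ Fin (4 * n), ∑ y : Fin (4 * n) ⊕ Fin (4 * n),
        ((cylinder n).dist x y : ℝ) ∧
      ∑ x : Fin (4 * n) ⊕ Fin (4 * n), ∑ y : Fin (4 * n) ⊕ Fin (4 * n),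
        ((cylinder n).dist x y : ℝ) ≤ 64 * (n : ℝ) ^ 3 + 192 * (n : ℝ) ^ 2 := by
  rw [← sum_cycDist]
  constructor
  · exact Finset.sum_le_sum fun x _ => Finset.sum_le_sum fun y _ => by
      exact_mod_cast (dist_bounds x y).1
  · have : ∀ x y : Fin (4 * n) ⊕ Fin (4 * n),
        ((cylinder n).dist x y : ℝ) ≤ cycDist (cylPos x) (cylPos y) + 3 := fun x y => by
      exact_mod_cast (dist_bounds x y).2
    refine (Finset.sum_le_sum fun x _ => Finset.sum_le_sum fun y _ => this x y).trans ?_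
    simp only [Finset.sum_add_distrib, Finset.sum_const, Finset.card_univ, Fintype.card_sum,
      Fintype.card_fin, nsmul_eq_mul]
    push_cast
    linarith

/-! ### The limit -/

/-- If `f n = a n³ + O(n²)` then `f n / n³` tends to `a`. -/
theorem tendsto_of_bounds {f : ℕ → ℝ} {a b : ℝ}
    (h : ∀ n : ℕ, 2 ≤ n → |f n - a * (n : ℝ) ^ 3| ≤ b * (n : ℝ) ^ 2) :
    Filter.Tendsto (fun n : ℕ => f n / (n : ℝ) ^ 3) Filter.atTop (nhds a) := by
  rw [tendsto_iff_norm_sub_tendsto_zero]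
  refine squeeze_zero' (Filter.Eventually.of_forall fun _ => norm_nonneg _) ?_
    (tendsto_const_div_atTop_nhds_zero_nat b)
  filter_upwards [Filter.eventually_ge_atTop 2] with n hn
  have h0 : (0 : ℝ) < n := by exact_mod_cast (by omega : 0 < n)
  have e : f n / (n : ℝ) ^ 3 - a = (f n - a * (n : ℝ) ^ 3) / (n : ℝ) ^ 3 := by field_simp
  rw [e, Real.norm_eq_abs, abs_div, abs_of_pos (pow_pos h0 3), div_le_div_iff₀ (pow_pos h0 3) h0]
  calc _ ≤ b * (n : ℝ) ^ 2 * n := mul_le_mul_of_nonneg_right (h n hn) h0.le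
    _ = b * (n : ℝ) ^ 3 := by ring

theorem stmt_19 (W Kf : ℕ → ℝ)
    (hW : ∀ n (_hn : 2 ≤ n),
      W n = (∑ x : Fin (4 * n) ⊕ Fin (4 * n), ∑ y : Fin (4 * n) ⊕ Fin (4 * n),
        ((cylinder n).dist x y : ℝ)) / 2)
    (hKf : ∀ n (_hn : 2 ≤ n), ∃ μs : Fin (8 * n) → ℝ, Monotone μs ∧
      μs ⟨0, by omega⟩ = 0 ∧ (∀ i : Fin (8 * n), i ≠ ⟨0, by omega⟩ → 0 < μs i) ∧
      ((cylinder n).lapMatrix ℝ).charpoly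
        = ∏ i : Fin (8 * n), (Polynomial.X - Polynomial.C (μs i)) ∧
      Kf n = (8 * n : ℝ) * ∑ i ∈ Finset.univ.erase (⟨0, by omega⟩ : Fin (8 * n)), (μs i)⁻¹) :
    Filter.Tendsto (fun n => W n / Kf n) Filter.atTop (nhds 3) := by
  have hWlim : Filter.Tendsto (fun n : ℕ => W n / (n : ℝ) ^ 3) Filter.atTop (nhds 32) := by
    refine tendsto_of_bounds (b := 96) fun n hn => ?_
    have : NeZero (4 * n) := ⟨by omega⟩
    obtain ⟨h1, h2⟩ := sum_dist_bounds (n := n)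
    rw [hW n hn, abs_le]
    have := sq_nonneg (n : ℝ)
    constructor <;> linarith
  have hKlim : Filter.Tendsto (fun n : ℕ => Kf n / (n : ℝ) ^ 3) Filter.atTop
      (nhds (32 / 3)) := by
    refine tendsto_of_bounds (b := 128) fun n hn => ?_
    have : NeZero (4 * n) := ⟨by omega⟩
    obtain ⟨μ, -, hμ0, -, hμ, hK⟩ := hKf n hn
    obtain ⟨h1, h2⟩ := sum_inv_bounds μ hμ
    -- The term of the zero eigenvalue may be added back because `0⁻¹ = 0`.
    rw [Finset.sum_erase _ (by rw [hμ0, inv_zero])] at hK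
    rw [hK, abs_le]
    have h0 : (2 : ℝ) ≤ n := by exact_mod_cast hn
    have h1' := mul_le_mul_of_nonneg_left h1 (by linarith : (0 : ℝ) ≤ 8 * n)
    have h2' := mul_le_mul_of_nonneg_left h2 (by linarith : (0 : ℝ) ≤ 8 * n)
    constructor <;> nlinarith
  have h := hWlim.div hKlim (by norm_num)
  norm_num at h
  refine h.congr' ?_
  filter_upwards [Filter.eventually_ge_atTop 2] with n hn
  have h0 : (n : ℝ) ^ 3 ≠ 0 := pow_ne_zero _ (by exact_mod_cast (by omega : n ≠ 0))
  simp only [Pi.div_apply]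
  rw [div_div_div_cancel_right₀ h0]
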